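/- (Theorem 3.1, part 1.) Let σ > 0 and let {Z^(k)} be the exact PBCD sequence with Z^(0) ∈ S^{N−1}. Then the whole sequence {Z^(k)} converges to a KKT point of the penalized problem (P_β). -/

import Mathlib

open Matrix Finset Filter Topology

noncomputable section

/-- Trace inner product `⟨A,B⟩ = Tr(AᵀB)` on `K×K` real matrices. -/
def mip {K : ℕ} (A B : Matrix (Fin K) (Fin K) ℝ) : ℝ := (Aᵀ * B).trace

/-- The section `S = {W : We = 𝟙, WᵀΞϱ = ϱ, Tr W = 0, W ≥ 0}` of the feasible region. -/
def Sset {K : ℕ} (e ϱ : Fin K → ℝ) : Set (Matrix (Fin K) (Fin K) ℝ) :=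
  {W | W.mulVec e = (fun _ => 1) ∧ Wᵀ.mulVec (fun j => e j * ϱ j) = ϱ ∧
    W.trace = 0 ∧ ∀ a b, 0 ≤ W a b}

/-- The discretized repulsive energy
`f(Z) = Σ_i ⟨X_i, ΛΞCΞ⟩ + Σ_{i<j} ⟨X_i, ΞΛX_jΞCΞ⟩` (blocks indexed by `Fin m`, `m = N−1`). -/
def fE {K m : ℕ} (e ϱ : Fin K → ℝ) (C : Matrix (Fin K) (Fin K) ℝ)
    (Z : Fin m → Matrix (Fin K) (Fin K) ℝ) : ℝ :=
  (∑ i, mip (Z i) (diagonal ϱ * diagonal e * C * diagonal e)) +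
    ∑ i, ∑ j ∈ Finset.Ioi i,
      mip (Z i) (diagonal e * diagonal ϱ * Z j * diagonal e * C * diagonal e)

/-- The `ℓ₁`-penalized energy `f_β(Z) = f(Z) + β Σ_{i<j} ⟨X_i, X_j⟩`. -/
def fB {K m : ℕ} (e ϱ : Fin K → ℝ) (C : Matrix (Fin K) (Fin K) ℝ) (β : ℝ)
    (Z : Fin m → Matrix (Fin K) (Fin K) ℝ) : ℝ :=
  fE e ϱ C Z + β * ∑ i, ∑ j ∈ Finset.Ioi i, mip (Z i) (Z j)

/-- The block gradient
`∇_{X_i} f_β(Z) = ΛΞCΞ + Σ_{j<i} ΛΞX_jΞCΞ + Σ_{j>i} ΞΛX_jΞCΞ + β Σ_{j≠i} X_j`. -/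
def gradB {K m : ℕ} (e ϱ : Fin K → ℝ) (C : Matrix (Fin K) (Fin K) ℝ) (β : ℝ)
    (Z : Fin m → Matrix (Fin K) (Fin K) ℝ) (i : Fin m) : Matrix (Fin K) (Fin K) ℝ :=
  diagonal ϱ * diagonal e * C * diagonal e
    + ∑ j ∈ Finset.Iio i, diagonal ϱ * diagonal e * Z j * diagonal e * C * diagonal e
    + ∑ j ∈ Finset.Ioi i, diagonal e * diagonal ϱ * Z j * diagonal e * C * diagonal e
    + β • ∑ j ∈ Finset.univ.erase i, Z j

/-- `Z* ∈ S^{N−1}` is a KKT point of the penalized problem `(P_β)` if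
`⟨∇_{X_i} f_β(Z*), X − X*_i⟩ ≥ 0` for all `X ∈ S` and all blocks `i`. -/
def IsKKT {K m : ℕ} (e ϱ : Fin K → ℝ) (C : Matrix (Fin K) (Fin K) ℝ) (β : ℝ)
    (Z : Fin m → Matrix (Fin K) (Fin K) ℝ) : Prop :=
  (∀ i, Z i ∈ Sset e ϱ) ∧
    ∀ i, ∀ X ∈ Sset e ϱ, 0 ≤ mip (gradB e ϱ C β Z i) (X - Z i)

/-- The `i`-th block objective of PBCD at outer iterate `Zold` (with the already-updated
blocks taken from `Znew`):
`X ↦ f_β(Znew_{<i}, X, Zold_{>i}) + (σ/2)‖X − Zold_i‖_F²`. -/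
def blockObj {K m : ℕ} (e ϱ : Fin K → ℝ) (C : Matrix (Fin K) (Fin K) ℝ) (β σ : ℝ)
    (Zold Znew : Fin m → Matrix (Fin K) (Fin K) ℝ) (i : Fin m)
    (X : Matrix (Fin K) (Fin K) ℝ) : ℝ :=
  fB e ϱ C β (fun j => if j < i then Znew j else if j = i then X else Zold j)
    + σ / 2 * mip (X - Zold i) (X - Zold i)

/-- `Zseq` is an exact PBCD sequence: for every `k` and every block `i` (in order),
`X_i^{(k+1)}` is the (unique) global solution of the `i`-th block problem. -/
def IsPBCD {K m : ℕ} (e ϱ : Fin K → ℝ) (C : Matrix (Fin K) (Fin K) ℝ) (β σ : ℝ)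
    (Zseq : ℕ → Fin m → Matrix (Fin K) (Fin K) ℝ) : Prop :=
  ∀ k i, Zseq (k + 1) i ∈ Sset e ϱ ∧
    ∀ X ∈ Sset e ϱ,
      blockObj e ϱ C β σ (Zseq k) (Zseq (k + 1)) i (Zseq (k + 1) i) ≤
        blockObj e ϱ C β σ (Zseq k) (Zseq (k + 1)) i X

/-- `Zbar` is the block-optimal sequence of `Zseq`: `X̄_i^{(k+1)}` is the (unique) global
solution of the `i`-th block problem built from the iterates of `Zseq` themselves. -/
def IsBlockOpt {K m : ℕ} (e ϱ : Fin K → ℝ) (C : Matrix (Fin K) (Fin K) ℝ) (β σ : ℝ)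
    (Zseq Zbar : ℕ → Fin m → Matrix (Fin K) (Fin K) ℝ) : Prop :=
  ∀ k i, Zbar (k + 1) i ∈ Sset e ϱ ∧
    ∀ X ∈ Sset e ϱ,
      blockObj e ϱ C β σ (Zseq k) (Zseq (k + 1)) i (Zbar (k + 1) i) ≤
        blockObj e ϱ C β σ (Zseq k) (Zseq (k + 1)) i X

/-- Frobenius norm of a block tuple `Z ∈ (ℝ^{K×K})^m`. -/
def nZ {K m : ℕ} (Z : Fin m → Matrix (Fin K) (Fin K) ℝ) : ℝ :=
  Real.sqrt (∑ i, mip (Z i) (Z i))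

section PBCDAux

lemma aux_bound {E : Type*} [NormedAddCommGroup E] [NormedSpace ℝ E] [FiniteDimensional ℝ E]
    (B : E →ₗ[ℝ] E →ₗ[ℝ] ℝ) : ∃ M : ℝ, 0 ≤ M ∧ ∀ x y, |B x y| ≤ M * ‖x‖ * ‖y‖ := by
  let T : E →L[ℝ] (E →L[ℝ] ℝ) := LinearMap.toContinuousLinearMap
    ((LinearMap.toContinuousLinearMap : (E →ₗ[ℝ] ℝ) ≃ₗ[ℝ] (E →L[ℝ] ℝ)).toLinearMap ∘ₗ B)
  refine ⟨‖T‖, T.opNorm_nonneg, fun x y => ?_⟩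
  exact T.le_opNorm₂ x y

lemma aux_right_inv {E F : Type*} [NormedAddCommGroup E] [NormedSpace ℝ E] [FiniteDimensional ℝ E]
    [NormedAddCommGroup F] [NormedSpace ℝ F]
    (T : E →ₗ[ℝ] F) : ∃ C : ℝ, 0 ≤ C ∧ ∀ x, ∃ d, T d = T x ∧ ‖d‖ ≤ C * ‖T x‖ := by
  obtain ⟨s, hs⟩ := T.rangeRestrict.exists_rightInverse_of_surjective T.range_rangeRestrict
  let sC := LinearMap.toContinuousLinearMap s
  refine ⟨‖sC‖, sC.opNorm_nonneg, fun x => ⟨s (T.rangeRestrict x), ?_, ?_⟩⟩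
  · have := LinearMap.congr_fun hs (T.rangeRestrict x)
    exact congrArg Subtype.val this
  · exact sC.le_opNorm (T.rangeRestrict x)

lemma aux_KL {E : Type*} [NormedAddCommGroup E] [NormedSpace ℝ E] [FiniteDimensional ℝ E]
    (l : E →ₗ[ℝ] ℝ) (B : E →ₗ[ℝ] E →ₗ[ℝ] ℝ) (hB : ∀ x y, B x y = B y x)
    (V : Submodule ℝ E) (x0 : E) :
    ∃ C ε qh : ℝ, 0 ≤ C ∧ 0 < ε ∧ ∀ x r, x - x0 ∈ V → 0 ≤ r → r ≤ ε →
      (∀ d ∈ V, |l d + B x d| ≤ r * ‖d‖) → |l x + 1/2 * B x x - qh| ≤ C * r ^ 2 := by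
  obtain ⟨M, hM, hMB⟩ := aux_bound B
  let Φ : (E →ₗ[ℝ] ℝ) →ₗ[ℝ] (V →L[ℝ] ℝ) :=
    (LinearMap.toContinuousLinearMap : (V →ₗ[ℝ] ℝ) ≃ₗ[ℝ] (V →L[ℝ] ℝ)).toLinearMap ∘ₗ
      (LinearMap.lcomp ℝ ℝ V.subtype)
  have hΦ : ∀ f (d : V), Φ f d = f d := fun f d => rfl
  let T : V →ₗ[ℝ] (V →L[ℝ] ℝ) := Φ ∘ₗ B ∘ₗ V.subtype
  have hT : ∀ d, T d = Φ (B d) := fun d => rfl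
  have hres : ∀ x r, 0 ≤ r → (∀ d ∈ V, |l d + B x d| ≤ r * ‖d‖) → ‖Φ l + Φ (B x)‖ ≤ r := by
    intro x r hr h
    refine ContinuousLinearMap.opNorm_le_bound _ hr fun d => ?_
    exact h d d.2
  by_cases hg : Φ l + Φ (B x0) ∈ LinearMap.range T
  · obtain ⟨d0, hd0⟩ := hg
    obtain ⟨C, hC, hinv⟩ := aux_right_inv (E := V) (F := V →L[ℝ] ℝ) T
    set y : E := x0 - d0 with hy
    have hy0 : ∀ d ∈ V, l d + B y d = 0 := by
      intro d hd
      have := DFunLike.congr_fun hd0 ⟨d, hd⟩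
      simp only [hT, hΦ, _root_.add_apply] at this
      simp only [hy, map_sub, LinearMap.sub_apply]; linarith
    refine ⟨M * C ^ 2, 1, l y + 1/2 * B y y, by positivity, one_pos, fun x r hx hr _ h => ?_⟩
    have hxy : x - y ∈ V := by
      have : x - y = (x - x0) + d0 := by rw [hy]; abel
      rw [this]; exact V.add_mem hx d0.2
    obtain ⟨d1, hd1, hd1n⟩ := hinv ⟨x - y, hxy⟩
    have hTx : T ⟨x - y, hxy⟩ = Φ l + Φ (B x) := by
      ext d
      have := hy0 d d.2
      have h4 : B (x - y) d = l d + B x d := by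
        rw [map_sub, LinearMap.sub_apply]; linarith
      exact h4
    have hn : ‖(d1 : E)‖ ≤ C * r := by
      calc ‖(d1 : E)‖ = ‖d1‖ := rfl
        _ ≤ _ := hd1n
        _ ≤ C * r := by rw [hTx]; gcongr; exact hres x r hr h
    -- with u = x - y, B d1 d = B u d on V
    have hBu : ∀ d ∈ V, B d1 d = B (x - y) d := by
      intro d hd
      exact DFunLike.congr_fun hd1 ⟨d, hd⟩
    have e1 := hBu _ hxy
    have e2 := hBu _ d1.2
    have e3 := hy0 _ hxy
    have key : l x + 1/2 * B x x - (l y + 1/2 * B y y) = 1/2 * B d1 d1 := by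
      have e4 := hB (d1 : E) (x - y)
      have e5 := hB x y
      simp only [map_sub, LinearMap.sub_apply] at *
      linarith
    rw [key, abs_mul]
    have := hMB (d1 : E) d1
    have h2 : M * ‖(d1 : E)‖ * ‖(d1 : E)‖ ≤ M * (C * r) * (C * r) := by gcongr
    have h3 : |(1/2 : ℝ)| = 1/2 := by norm_num
    rw [h3]
    have := abs_nonneg (B (d1 : E) d1)
    nlinarith
  · have hcl : IsClosed ((LinearMap.range T : Submodule ℝ (V →L[ℝ] ℝ)) : Set (V →L[ℝ] ℝ)) :=
      Submodule.closed_of_finiteDimensional _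
    obtain ⟨ε, hε, hball⟩ := Metric.isOpen_iff.1 hcl.isOpen_compl (Φ l + Φ (B x0)) hg
    refine ⟨0, ε / 2, 0, le_rfl, by positivity, fun x r hx hr hrε h => ?_⟩
    exfalso
    have h1 := hres x r hr h
    have h2 : T (⟨x0 - x, by rw [← neg_sub]; exact V.neg_mem hx⟩ : V) ∈
        Metric.ball (Φ l + Φ (B x0)) ε := by
      refine lt_of_eq_of_lt (dist_eq_norm (E := V →L[ℝ] ℝ) _ _) ?_
      refine lt_of_le_of_lt (ContinuousLinearMap.opNorm_le_bound _ hr fun d => ?_)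
        (by linarith : r < ε)
      have h3 : |B (x0 - x) d - (l d + B x0 d)| ≤ r * ‖(d : E)‖ := by
        have h4 : B (x0 - x) d - (l d + B x0 d) = - (l d + B x d) := by
          rw [map_sub, LinearMap.sub_apply]; ring
        rw [h4, abs_neg]; exact h d d.2
      exact h3
    exact hball h2 ⟨_, rfl⟩

lemma aux_conv {E : Type*} [NormedAddCommGroup E] [NormedSpace ℝ E] [FiniteDimensional ℝ E]
    (l : E →ₗ[ℝ] ℝ) (B : E →ₗ[ℝ] E →ₗ[ℝ] ℝ) (hB : ∀ x y, B x y = B y x)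
    {ι : Type*} [Finite ι] (P : Set E) (τ : E → ι) (V : ι → Submodule ℝ E)
    (hcl : IsClosed P)
    (h1 : ∀ x ∈ P, ∀ d ∈ V (τ x), ∃ t : ℝ, 0 < t ∧ x + t • d ∈ P)
    (h2 : ∀ x ∈ P, ∀ y ∈ P, τ x = τ y → y - x ∈ V (τ x))
    (x : ℕ → E) (hx : ∀ k, x k ∈ P) (a b c : ℝ) (ha : 0 < a) (hb : 0 ≤ b)
    (hbd : ∀ k, c ≤ l (x k) + 1/2 * B (x k) (x k))
    (hdec : ∀ k, l (x (k+1)) + 1/2 * B (x (k+1)) (x (k+1)) + a * ‖x (k+1) - x k‖ ^ 2 ≤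
      l (x k) + 1/2 * B (x k) (x k))
    (hvi : ∀ k, ∀ X ∈ P, -(b * ‖x (k+1) - x k‖ * ‖X - x (k+1)‖) ≤
      l (X - x (k+1)) + B (x (k+1)) (X - x (k+1))) :
    ∃ xs ∈ P, (∀ X ∈ P, 0 ≤ l (X - xs) + B xs (X - xs)) ∧ Tendsto x atTop (𝓝 xs) := by
  set q : ℕ → ℝ := fun k => l (x k) + 1/2 * B (x k) (x k) with hq
  have hdec' : ∀ k, q (k+1) + a * ‖x (k+1) - x k‖ ^ 2 ≤ q k := hdec
  have hanti : Antitone q := antitone_nat_of_succ_le fun k => by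
    have := hdec' k
    have : 0 ≤ a * ‖x (k+1) - x k‖ ^ 2 := by positivity
    linarith
  obtain ⟨qs, hqs⟩ : ∃ qs, Tendsto q atTop (𝓝 qs) :=
    ⟨_, tendsto_atTop_ciInf hanti ⟨c, by rintro _ ⟨k, rfl⟩; exact hbd k⟩⟩
  have hge : ∀ k, qs ≤ q k := fun k => hanti.le_of_tendsto hqs k
  have hqs1 : Tendsto (fun k => q (k+1)) atTop (𝓝 qs) := (tendsto_add_atTop_iff_nat 1).2 hqs
  have hsq : Tendsto (fun k => ‖x (k+1) - x k‖ ^ 2) atTop (𝓝 0) := by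
    have hlim : Tendsto (fun k => (q k - q (k+1)) / a) atTop (𝓝 0) := by
      have := (hqs.sub hqs1).div_const a
      simpa using this
    refine squeeze_zero (fun k => by positivity) (fun k => ?_) hlim
    rw [le_div_iff₀ ha]; linarith [hdec' k]
  have hstep : Tendsto (fun k => ‖x (k+1) - x k‖) atTop (𝓝 0) := by
    have := hsq.sqrt
    simpa [Real.sqrt_sq] using this
  -- residual bound
  have hres : ∀ k, ∀ d ∈ V (τ (x (k+1))),
      |l d + B (x (k+1)) d| ≤ (b * ‖x (k+1) - x k‖) * ‖d‖ := by
    have half : ∀ k, ∀ d ∈ V (τ (x (k+1))),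
      -((b * ‖x (k+1) - x k‖) * ‖d‖) ≤ l d + B (x (k+1)) d := by
      intro k d hd
      obtain ⟨t, ht, hmem⟩ := h1 _ (hx (k+1)) d hd
      have := hvi k _ hmem
      rw [add_sub_cancel_left, map_smul, map_smul, norm_smul, Real.norm_of_nonneg ht.le,
        smul_eq_mul, smul_eq_mul] at this
      have h3 : t * (-((b * ‖x (k+1) - x k‖) * ‖d‖)) ≤ t * (l d + B (x (k+1)) d) := by linarith
      exact le_of_mul_le_mul_left h3 ht
    intro k d hd
    have p1 := half k d hd
    have p2 := half k (-d) ((V _).neg_mem hd)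
    rw [map_neg, map_neg, norm_neg] at p2
    rw [abs_le]; constructor <;> linarith
  have hI : ∀ i : ι, ∃ C : ℝ, 0 ≤ C ∧ ∀ᶠ k in atTop, τ (x (k+1)) = i →
      q (k+1) - qs ≤ C * ‖x (k+1) - x k‖ ^ 2 := by
    intro i
    by_cases hf : ∃ᶠ k in atTop, τ (x (k+1)) = i
    · obtain ⟨k0, hk0⟩ := hf.exists
      obtain ⟨C, ε, qh, hC, hε, hKL⟩ := aux_KL l B hB (V i) (x (k0+1))
      have hsmall : ∀ᶠ k in atTop, b * ‖x (k+1) - x k‖ ≤ ε := by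
        have : Tendsto (fun k => b * ‖x (k+1) - x k‖) atTop (𝓝 0) := by
          simpa using hstep.const_mul b
        exact (this.eventually (gt_mem_nhds hε)).mono fun k hk => le_of_lt hk
      have hev : ∀ᶠ k in atTop, τ (x (k+1)) = i →
          |q (k+1) - qh| ≤ C * (b * ‖x (k+1) - x k‖) ^ 2 := by
        filter_upwards [hsmall] with k hk hki
        refine hKL _ _ ?_ (by positivity) hk ?_
        · have := h2 _ (hx (k0+1)) _ (hx (k+1)) (hk0.trans hki.symm)
          rwa [hk0] at this
        · have := hres k
          rwa [hki] at this
      have hqh : qh = qs := by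
        have l1 : Tendsto (fun k => |q (k+1) - qh|) atTop (𝓝 |qs - qh|) :=
          (hqs1.sub_const qh).abs
        have l2 : Tendsto (fun k => C * (b * ‖x (k+1) - x k‖) ^ 2) atTop (𝓝 0) := by
          simpa using ((hstep.const_mul b).pow 2).const_mul C
        have := le_of_tendsto_of_tendsto_of_frequently l1 l2 ((hf.and_eventually hev).mono fun k hk => hk.2 hk.1)
        have := abs_eq_zero.1 (le_antisymm this (abs_nonneg _))
        linarith
      refine ⟨C * b ^ 2, by positivity, hev.mono fun k hk hki => ?_⟩
      have := (le_abs_self _).trans (hk hki)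
      rw [hqh] at this
      linarith
    · refine ⟨0, le_rfl, (not_frequently.1 hf).mono fun k hk hki => absurd hki hk⟩
  choose Cf hCf hCf' using hI
  cases nonempty_fintype ι
  have hall : ∀ᶠ k in atTop, q (k+1) - qs ≤ (∑ i, Cf i) * ‖x (k+1) - x k‖ ^ 2 := by
    filter_upwards [eventually_all.2 hCf'] with k hk
    refine (hk _ rfl).trans ?_
    gcongr
    exact Finset.single_le_sum (fun i _ => hCf i) (Finset.mem_univ _)
  set D := (∑ i, Cf i) / a with hD
  have hD0 : 0 ≤ D := div_nonneg (Finset.sum_nonneg fun i _ => hCf i) ha.le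
  obtain ⟨k0, hk0⟩ := eventually_atTop.1 hall
  set θ := D / (1 + D) with hθ
  have hθ0 : 0 ≤ θ := by positivity
  have hθ1 : θ < 1 := by rw [hθ, div_lt_one (by positivity)]; linarith
  have hcontr : ∀ k ≥ k0, q (k+1) - qs ≤ θ * (q k - qs) := by
    intro k hk
    have p1 := hk0 k hk
    have p2 : ‖x (k+1) - x k‖ ^ 2 ≤ (q k - q (k+1)) / a := by
      rw [le_div_iff₀ ha]; linarith [hdec' k]
    have p3 : q (k+1) - qs ≤ D * (q k - q (k+1)) := by
      refine p1.trans ?_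
      calc _ ≤ (∑ i, Cf i) * ((q k - q (k+1)) / a) := by
            gcongr; exact Finset.sum_nonneg fun i _ => hCf i
        _ = _ := by rw [hD]; ring
    rw [hθ, div_mul_eq_mul_div, le_div_iff₀ (by positivity)]
    linarith
  have hgeo : ∀ n, q (n + k0) - qs ≤ θ ^ n * (q k0 - qs) := by
    intro n
    induction n with
    | zero => simp
    | succ n ih =>
      have := hcontr (n + k0) (by omega)
      rw [show n + 1 + k0 = n + k0 + 1 by ring]
      calc _ ≤ _ := this
        _ ≤ θ * (θ ^ n * (q k0 - qs)) := by gcongr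
        _ = _ := by ring
  have hcau : CauchySeq (fun n => x (n + k0)) := by
    refine cauchySeq_of_le_geometric (Real.sqrt θ) (Real.sqrt ((q k0 - qs) / a)) ?_ fun n => ?_
    · rw [Real.sqrt_lt' one_pos]; simpa using hθ1
    · rw [dist_comm, dist_eq_norm, show n + 1 + k0 = n + k0 + 1 by ring]
      refine abs_le_of_sq_le_sq' ?_ (by positivity) |>.2
      have p0 : 0 ≤ (q k0 - qs) / a := div_nonneg (by linarith [hge k0]) ha.le
      rw [mul_pow, Real.sq_sqrt p0, ← pow_mul, mul_comm n 2, pow_mul, Real.sq_sqrt hθ0,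
        div_mul_eq_mul_div, le_div_iff₀ ha]
      have := hdec' (n + k0)
      have := hgeo n
      have := hge (n + k0 + 1)
      linarith
  have : CompleteSpace E := FiniteDimensional.complete ℝ E
  obtain ⟨xs, hxs⟩ := cauchySeq_tendsto_of_complete hcau
  have hxs' : Tendsto x atTop (𝓝 xs) := (tendsto_add_atTop_iff_nat k0).1 hxs
  refine ⟨xs, hcl.mem_of_tendsto hxs' (Eventually.of_forall hx), fun X hX => ?_, hxs'⟩
  have hxs1 : Tendsto (fun k => x (k+1)) atTop (𝓝 xs) := (tendsto_add_atTop_iff_nat 1).2 hxs'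
  have hlc : Continuous l := l.continuous_of_finiteDimensional
  have hBc : Continuous fun p : E × E => B p.1 p.2 := by
    let T : E →L[ℝ] (E →L[ℝ] ℝ) := LinearMap.toContinuousLinearMap
      ((LinearMap.toContinuousLinearMap : (E →ₗ[ℝ] ℝ) ≃ₗ[ℝ] (E →L[ℝ] ℝ)).toLinearMap ∘ₗ B)
    exact T.continuous₂
  have lim1 : Tendsto (fun k => l (X - x (k+1)) + B (x (k+1)) (X - x (k+1))) atTop
      (𝓝 (l (X - xs) + B xs (X - xs))) := by
    have hd := hxs1.const_sub X
    exact ((hlc.tendsto _).comp hd).add ((hBc.tendsto (xs, X - xs)).comp (hxs1.prodMk_nhds hd))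
  have lim2 : Tendsto (fun k => -(b * ‖x (k+1) - x k‖ * ‖X - x (k+1)‖)) atTop (𝓝 0) := by
    have := ((hstep.const_mul b).mul (hxs1.const_sub X).norm).neg
    simpa using this
  exact le_of_tendsto_of_tendsto' lim2 lim1 fun k => hvi k X hX


lemma aux_sum_erase {m : ℕ} {M : Type*} [AddCommMonoid M] (i : Fin m) (f : Fin m → M) :
    ∑ j ∈ Finset.univ.erase i, f j = ∑ j ∈ Finset.Iio i, f j + ∑ j ∈ Finset.Ioi i, f j := by
  rw [← Finset.sum_union]
  · congr 1
    ext j; simp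
  · rw [Finset.disjoint_left]; intro j; simp only [Finset.mem_Iio, Finset.mem_Ioi]
    exact fun h g => lt_asymm h g

lemma aux_vi {E : Type*} [AddCommGroup E] [Module ℝ E] (S : Set E) (hS : Convex ℝ S)
    (g : E → ℝ) (G : E →ₗ[ℝ] ℝ) (p : E →ₗ[ℝ] E →ₗ[ℝ] ℝ) (hp : ∀ x y, p x y = p y x)
    (σ : ℝ) (xn xo : E) (hxn : xn ∈ S)
    (hg : ∀ X Y, g X - g Y = G (X - Y))
    (hmin : ∀ X ∈ S, g xn + σ / 2 * p (xn - xo) (xn - xo) ≤ g X + σ / 2 * p (X - xo) (X - xo))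
    (X : E) (hX : X ∈ S) : 0 ≤ G (X - xn) + σ * p (xn - xo) (X - xn) := by
  set v := X - xn with hv
  set A := G v + σ * p (xn - xo) v with hA
  have key : ∀ t : ℝ, 0 < t → t ≤ 1 → 0 ≤ A + t * (σ / 2 * p v v) := by
    intro t ht ht1
    have hm : xn + t • v ∈ S := hS.add_smul_sub_mem hxn hX ⟨ht.le, ht1⟩
    have h1 := hmin _ hm
    have h2 := hg (xn + t • v) xn
    rw [add_sub_cancel_left, map_smul, smul_eq_mul] at h2
    have h3 : xn + t • v - xo = (xn - xo) + t • v := by abel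
    have h4 := hp (xn - xo) v
    rw [h3] at h1
    simp only [map_add, map_smul, LinearMap.add_apply, LinearMap.smul_apply, smul_eq_mul] at h1
    have h5 : 0 ≤ t * (A + t * (σ / 2 * p v v)) := by
      rw [hA]; rw [← h4] at h1; nlinarith
    exact nonneg_of_mul_nonneg_right h5 ht
  have lim : Tendsto (fun t : ℝ => A + t * (σ / 2 * p v v)) (𝓝[>] 0) (𝓝 A) := by
    have : Continuous (fun t : ℝ => A + t * (σ / 2 * p v v)) := by fun_prop
    have := this.tendsto 0
    simp only [zero_mul, add_zero] at this
    exact this.mono_left nhdsWithin_le_nhds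
  refine ge_of_tendsto lim ?_
  filter_upwards [Ioc_mem_nhdsGT (zero_lt_one' ℝ)] with t ht
  exact key t ht.1 ht.2

lemma aux_block {E : Type*} [NormedAddCommGroup E] [NormedSpace ℝ E] [FiniteDimensional ℝ E]
    {m : ℕ} (l0 : E →ₗ[ℝ] ℝ) (b p : E →ₗ[ℝ] E →ₗ[ℝ] ℝ)
    (hb : ∀ x y, b x y = b y x) (hp : ∀ x y, p x y = p y x) (hpn : ∀ x, ‖x‖ ^ 2 ≤ p x x)
    (S : Set E) (hconv : Convex ℝ S) (hcl : IsClosed S)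
    {ι : Type*} [Finite ι] (τ : E → ι) (V : ι → Submodule ℝ E)
    (h1 : ∀ x ∈ S, ∀ d ∈ V (τ x), ∀ᶠ t : ℝ in 𝓝[>] 0, x + t • d ∈ S)
    (h2 : ∀ x ∈ S, ∀ y ∈ S, τ x = τ y → y - x ∈ V (τ x))
    (F : (Fin m → E) → ℝ)
    (hF : ∀ Z, F Z = ∑ i, l0 (Z i) + ∑ i, ∑ j ∈ Finset.Ioi i, b (Z i) (Z j))
    (hF0 : ∀ Z, (∀ i, Z i ∈ S) → 0 ≤ F Z) (σ : ℝ) (hσ : 0 < σ)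
    (Z : ℕ → Fin m → E) (hZ0 : ∀ i, Z 0 i ∈ S)
    (hmin : ∀ k i, Z (k+1) i ∈ S ∧ ∀ X ∈ S,
      F (fun j => if j < i then Z (k+1) j else if j = i then Z (k+1) i else Z k j)
        + σ / 2 * p (Z (k+1) i - Z k i) (Z (k+1) i - Z k i) ≤
      F (fun j => if j < i then Z (k+1) j else if j = i then X else Z k j)
        + σ / 2 * p (X - Z k i) (X - Z k i)) :
    ∃ Zs : Fin m → E, (∀ i, Zs i ∈ S) ∧
      (∀ i, ∀ X ∈ S, 0 ≤ l0 (X - Zs i) + ∑ j ∈ Finset.univ.erase i, b (Zs j) (X - Zs i)) ∧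
      Tendsto Z atTop (𝓝 Zs) := by
  have hZ : ∀ k i, Z k i ∈ S := by
    intro k i
    cases k with
    | zero => exact hZ0 i
    | succ k => exact (hmin k i).1
  let l : (Fin m → E) →ₗ[ℝ] ℝ := ∑ i, l0 ∘ₗ LinearMap.proj i
  let B : (Fin m → E) →ₗ[ℝ] (Fin m → E) →ₗ[ℝ] ℝ :=
    ∑ i, ∑ j ∈ Finset.univ.erase i, b.compl₁₂ (LinearMap.proj i) (LinearMap.proj j)
  have hl : ∀ x, l x = ∑ i, l0 (x i) := by intro x; simp [l, LinearMap.sum_apply]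
  have hBa : ∀ x y, B x y = ∑ i, ∑ j ∈ Finset.univ.erase i, b (x i) (y j) := by
    intro x y; simp only [B, LinearMap.sum_apply, LinearMap.compl₁₂_apply, LinearMap.proj_apply]
  have hswap : ∀ f : Fin m → Fin m → ℝ, ∑ i, ∑ j ∈ Finset.Iio i, f i j =
      ∑ i, ∑ j ∈ Finset.Ioi i, f j i := by
    intro f
    apply Finset.sum_comm'
    intro x y; simp
  have hBs : ∀ x y, B x y = B y x := by
    intro x y
    simp only [hBa, aux_sum_erase, Finset.sum_add_distrib]
    rw [hswap, hswap, add_comm]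
    congr 1 <;>
    exact Finset.sum_congr rfl fun i _ => Finset.sum_congr rfl fun j _ => hb _ _
  have hq : ∀ x, F x = l x + 1/2 * B x x := by
    intro x
    rw [hF, hl, hBa]
    simp only [aux_sum_erase, Finset.sum_add_distrib]
    rw [hswap]
    have : ∑ i, ∑ j ∈ Finset.Ioi i, b (x j) (x i) = ∑ i, ∑ j ∈ Finset.Ioi i, b (x i) (x j) :=
      Finset.sum_congr rfl fun i _ => Finset.sum_congr rfl fun j _ => hb _ _
    rw [this]; ring
  have hls : ∀ i v, l (Pi.single i v) = l0 v := by
    intro i v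
    rw [hl, Finset.sum_eq_single i]
    · simp
    · intro j _ hj; simp [Pi.single_eq_of_ne hj]
    · simp
  have hBsingle : ∀ i v x, B x (Pi.single i v) = ∑ j ∈ Finset.univ.erase i, b (x j) v := by
    intro i v x
    rw [hBs, hBa, Finset.sum_eq_single i]
    · simp [hb v]
    · intro j _ hj; simp [Pi.single_eq_of_ne hj]
    · simp
  have hFupd : ∀ W i X Y, F (Function.update W i X) - F (Function.update W i Y) =
      (l0 + ∑ j ∈ Finset.univ.erase i, b (W j)) (X - Y) := by
    intro W i X Y
    have hd : Function.update W i X = Function.update W i Y + Pi.single i (X - Y) := by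
      ext j
      by_cases hj : j = i
      · subst hj; simp
      · simp [hj]
    have e1 : B (Pi.single i (X - Y)) (Pi.single i (X - Y)) = 0 := by
      rw [hBsingle]
      refine Finset.sum_eq_zero fun j hj => ?_
      rw [Pi.single_eq_of_ne (Finset.ne_of_mem_erase hj)]; simp
    have e2 : B (Function.update W i Y) (Pi.single i (X - Y)) =
        ∑ j ∈ Finset.univ.erase i, b (W j) (X - Y) := by
      rw [hBsingle]
      refine Finset.sum_congr rfl fun j hj => ?_
      rw [Function.update_of_ne (Finset.ne_of_mem_erase hj)]
    have e3 := hBs (Function.update W i Y) (Pi.single i (X - Y))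
    have e4 := hls i (X - Y)
    rw [hq, hq, hd]
    simp only [map_add, LinearMap.add_apply, LinearMap.sum_apply] at *
    rw [← e3, e1, e2, e4]; ring
  -- partial iterates
  let U : ℕ → ℕ → Fin m → E := fun k n j => if j.val < n then Z (k+1) j else Z k j
  have hU0 : ∀ k, U k 0 = Z k := by intro k; ext j; simp [U]
  have hUm : ∀ k, U k m = Z (k+1) := by intro k; ext j; simp [U]
  have hUu : ∀ k (i : Fin m) X,
      (fun j => if j < i then Z (k+1) j else if j = i then X else Z k j) =
        Function.update (U k i) i X := by
    intro k i X
    ext j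
    by_cases hj : j = i
    · subst hj; simp
    · simp [hj, U]
  have hUi : ∀ k (i : Fin m), Function.update (U k i) i (Z k i) = U k i := by
    intro k i
    rw [Function.update_eq_self_iff]
    simp [U]
  have hUs : ∀ k (i : Fin m), Function.update (U k i) i (Z (k+1) i) = U k (i+1) := by
    intro k i
    ext j
    by_cases hj : j = i
    · subst hj; simp [U]
    · have : (j : ℕ) ≠ i := fun h => hj (Fin.ext h)
      have h3 : (j : ℕ) < i + 1 ↔ (j : ℕ) < i := by omega
      simp [hj, U, h3]
  have hmin' : ∀ k (i : Fin m), ∀ X ∈ S,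
      F (Function.update (U k i) i (Z (k+1) i))
        + σ / 2 * p (Z (k+1) i - Z k i) (Z (k+1) i - Z k i) ≤
      F (Function.update (U k i) i X) + σ / 2 * p (X - Z k i) (X - Z k i) := by
    intro k i X hX
    have := (hmin k i).2 X hX
    rwa [hUu, hUu] at this
  obtain ⟨Mb, hMb0, hMb⟩ := aux_bound b
  obtain ⟨Mp, hMp0, hMp⟩ := aux_bound p
  have hpn0 : ∀ x, 0 ≤ p x x := fun x => (sq_nonneg _).trans (hpn x)
  have hconvg := aux_conv l B hBs (Set.univ.pi fun _ => S) (fun x i => τ (x i))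
    (fun I => Submodule.pi Set.univ fun i => V (I i))
    (isClosed_set_pi fun i _ => hcl) ?_ ?_ Z (fun k i _ => hZ k i) (σ/2)
    (m * (σ * Mp + m * Mb)) 0 (by positivity) (by positivity) ?_ ?_ ?_
  · obtain ⟨Zs, hZs, hvi, hlim⟩ := hconvg
    have hZs' : ∀ i, Zs i ∈ S := fun i => hZs i trivial
    refine ⟨Zs, hZs', fun i X hX => ?_, hlim⟩
    have := hvi (Function.update Zs i X) (by
      intro j _
      by_cases hj : j = i
      · subst hj; simpa using hX
      · simpa [hj] using hZs' j)
    have hd : Function.update Zs i X - Zs = Pi.single i (X - Zs i) := by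
      ext j
      by_cases hj : j = i
      · subst hj; simp
      · simp [hj]
    rwa [hd, hls, hBsingle] at this
  · intro x hx d hd
    have hev : ∀ᶠ t : ℝ in 𝓝[>] 0, ∀ i, x i + t • d i ∈ S :=
      eventually_all.2 fun i => h1 _ (hx i trivial) _ (hd i trivial)
    obtain ⟨t, ht, ht0⟩ := (hev.and self_mem_nhdsWithin).exists
    exact ⟨t, ht0, fun i _ => ht i⟩
  · intro x hx y hy hxy i _
    exact h2 _ (hx i trivial) _ (hy i trivial) (congrFun hxy i)
  · intro k
    rw [← hq]; exact hF0 _ (hZ k)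
  · intro k
    rw [← hq, ← hq]
    have hstep : ∀ n ≤ m, F (U k n) + ∑ i : Fin m, (if i.val < n then
        σ / 2 * p (Z (k+1) i - Z k i) (Z (k+1) i - Z k i) else 0) ≤ F (Z k) := by
      intro n
      induction n with
      | zero => intro _; simp [hU0]
      | succ n ih =>
        intro hn
        have ih := ih (by omega)
        let i : Fin m := ⟨n, by omega⟩
        have h3 := hmin' k i (Z k i) (hZ k i)
        rw [hUs, hUi] at h3
        simp only [sub_self, map_zero, mul_zero, add_zero] at h3
        have h4 : ∑ j : Fin m, (if j.val < n + 1 then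
            σ / 2 * p (Z (k+1) j - Z k j) (Z (k+1) j - Z k j) else 0) =
            ∑ j : Fin m, (if j.val < n then
            σ / 2 * p (Z (k+1) j - Z k j) (Z (k+1) j - Z k j) else 0) +
            σ / 2 * p (Z (k+1) i - Z k i) (Z (k+1) i - Z k i) := by
          have h5 : ∀ j : Fin m, (if j.val < n + 1 then
            σ / 2 * p (Z (k+1) j - Z k j) (Z (k+1) j - Z k j) else 0) = (if j.val < n then
            σ / 2 * p (Z (k+1) j - Z k j) (Z (k+1) j - Z k j) else 0) + (if j = i then
            σ / 2 * p (Z (k+1) j - Z k j) (Z (k+1) j - Z k j) else 0) := by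
            intro j
            have e : j = i ↔ j.val = n := Fin.ext_iff
            rcases lt_trichotomy j.val n with h | h | h
            · rw [if_pos (by omega), if_pos h, if_neg (by rw [e]; omega), add_zero]
            · rw [if_pos (by omega), if_neg (by omega), if_pos (e.2 h), zero_add]
            · rw [if_neg (by omega), if_neg (by omega), if_neg (by rw [e]; omega), add_zero]
          rw [Finset.sum_congr rfl fun j _ => h5 j, Finset.sum_add_distrib]
          simp
        rw [h4]
        change F (U k (n+1)) + _ ≤ F (U k n) at h3
        linarith
    have h3 := hstep m le_rfl
    rw [hUm] at h3
    simp only [Fin.is_lt, if_true] at h3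
    have h4 : ‖Z (k+1) - Z k‖ ^ 2 ≤ ∑ i, p (Z (k+1) i - Z k i) (Z (k+1) i - Z k i) := by
      have hs0 : 0 ≤ ∑ i, p (Z (k+1) i - Z k i) (Z (k+1) i - Z k i) :=
        Finset.sum_nonneg fun i _ => hpn0 _
      have : ‖Z (k+1) - Z k‖ ≤ Real.sqrt (∑ i, p (Z (k+1) i - Z k i) (Z (k+1) i - Z k i)) := by
        rw [pi_norm_le_iff_of_nonneg (Real.sqrt_nonneg _)]
        intro i
        refine Real.le_sqrt_of_sq_le ((hpn _).trans ?_)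
        exact Finset.single_le_sum (f := fun i => p (Z (k+1) i - Z k i) (Z (k+1) i - Z k i))
          (fun i _ => hpn0 _) (Finset.mem_univ i)
      calc _ ≤ (Real.sqrt _) ^ 2 := by gcongr
        _ = _ := Real.sq_sqrt hs0
    rw [← Finset.mul_sum] at h3
    have : σ / 2 * ‖Z (k+1) - Z k‖ ^ 2 ≤
      σ / 2 * ∑ i, p (Z (k+1) i - Z k i) (Z (k+1) i - Z k i) := by gcongr
    linarith
  · intro k X hX
    set δ := ‖Z (k+1) - Z k‖ with hδ
    set ν := ‖X - Z (k+1)‖ with hν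
    have hper : ∀ i, -((σ * Mp + m * Mb) * δ * ν) ≤
        l0 (X i - Z (k+1) i) + ∑ j ∈ Finset.univ.erase i, b (Z (k+1) j) (X i - Z (k+1) i) := by
      intro i
      have hv := aux_vi S hconv (fun Y => F (Function.update (U k i) i Y)) _ p hp σ
        (Z (k+1) i) (Z k i) (hZ _ _) (hFupd (U k i) i) (hmin' k i) (X i) (hX i trivial)
      set v := X i - Z (k+1) i with hvdef
      have hvν : ‖v‖ ≤ ν := norm_le_pi_norm (X - Z (k+1)) i
      have hΔ : ∀ j, ‖Z (k+1) j - Z k j‖ ≤ δ := fun j => norm_le_pi_norm (Z (k+1) - Z k) j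
      have p1 : σ * p (Z (k+1) i - Z k i) v ≤ σ * Mp * δ * ν := by
        have : p (Z (k+1) i - Z k i) v ≤ Mp * δ * ν :=
          (le_abs_self _).trans ((hMp _ _).trans (by gcongr; exact hΔ i))
        calc _ ≤ σ * (Mp * δ * ν) := by gcongr
          _ = _ := by ring
      have p2 : ∑ j ∈ Finset.univ.erase i, (b (U k i j) v - b (Z (k+1) j) v) ≤ m * Mb * δ * ν := by
        have q1 : ∀ j, b (U k i j) v - b (Z (k+1) j) v ≤ Mb * δ * ν := by
          intro j
          rw [← LinearMap.sub_apply, ← map_sub]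
          refine (le_abs_self _).trans ((hMb _ _).trans ?_)
          have : ‖U k i j - Z (k+1) j‖ ≤ δ := by
            simp only [U]
            split_ifs
            · simp [hδ]
            · rw [norm_sub_rev]; exact hΔ j
          gcongr
        calc _ ≤ ∑ j ∈ Finset.univ.erase i, Mb * δ * ν := Finset.sum_le_sum fun j _ => q1 j
          _ ≤ ∑ j : Fin m, Mb * δ * ν :=
            Finset.sum_le_sum_of_subset_of_nonneg (Finset.erase_subset _ _)
              fun _ _ _ => by positivity
          _ = _ := by simp; ring
      rw [Finset.sum_sub_distrib] at p2
      simp only [LinearMap.add_apply, LinearMap.sum_apply] at hv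
      linarith
    have heq : l (X - Z (k+1)) + B (Z (k+1)) (X - Z (k+1)) = ∑ i,
        (l0 (X i - Z (k+1) i) + ∑ j ∈ Finset.univ.erase i, b (Z (k+1) j) (X i - Z (k+1) i)) := by
      rw [hl, hBs, hBa, ← Finset.sum_add_distrib]
      refine Finset.sum_congr rfl fun i _ => ?_
      congr 1
      exact Finset.sum_congr rfl fun j _ => hb _ _
    rw [heq]
    calc -(m * (σ * Mp + m * Mb) * δ * ν) = ∑ i : Fin m, -((σ * Mp + m * Mb) * δ * ν) := by
          simp; ring
      _ ≤ _ := Finset.sum_le_sum fun i _ => hper i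

end PBCDAux

section PBCDConcrete

attribute [local instance] Matrix.normedAddCommGroup Matrix.normedSpace

lemma mip_eq_sum {K : ℕ} (A B : Matrix (Fin K) (Fin K) ℝ) :
    mip A B = ∑ b, ∑ a, A a b * B a b := by
  simp [mip, Matrix.trace, Matrix.mul_apply]

lemma mip_symm {K : ℕ} (A B : Matrix (Fin K) (Fin K) ℝ) : mip A B = mip B A := by
  simp only [mip_eq_sum, mul_comm]

def mipL (K : ℕ) : Matrix (Fin K) (Fin K) ℝ →ₗ[ℝ] Matrix (Fin K) (Fin K) ℝ →ₗ[ℝ] ℝ :=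
  LinearMap.mk₂ ℝ mip
    (by intros; simp [mip, Matrix.add_mul])
    (by intros; simp [mip])
    (by intros; simp [mip, Matrix.mul_add])
    (by intros; simp [mip])

lemma mipL_apply {K : ℕ} (A B : Matrix (Fin K) (Fin K) ℝ) : mipL K A B = mip A B := rfl

lemma mip_norm {K : ℕ} (A : Matrix (Fin K) (Fin K) ℝ) : ‖A‖ ^ 2 ≤ mip A A := by
  have h0 : 0 ≤ mip A A := by
    rw [mip_eq_sum]
    exact Finset.sum_nonneg fun _ _ => Finset.sum_nonneg fun _ _ => mul_self_nonneg _
  have : ‖A‖ ≤ Real.sqrt (mip A A) := by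
    rw [Matrix.norm_le_iff (Real.sqrt_nonneg _)]
    intro i j
    refine Real.le_sqrt_of_sq_le ?_
    rw [mip_eq_sum, Real.norm_eq_abs, sq_abs, sq]
    refine le_trans ?_ (Finset.single_le_sum (f := fun b => ∑ a, A a b * A a b)
      (fun b _ => Finset.sum_nonneg fun _ _ => mul_self_nonneg _) (Finset.mem_univ j))
    exact Finset.single_le_sum (f := fun a => A a j * A a j)
      (fun b _ => mul_self_nonneg _) (Finset.mem_univ i)
  calc _ ≤ (Real.sqrt _) ^ 2 := by gcongr
    _ = _ := Real.sq_sqrt h0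

lemma mip_nonneg {K : ℕ} (A B : Matrix (Fin K) (Fin K) ℝ) (hA : ∀ a b, 0 ≤ A a b)
    (hB : ∀ a b, 0 ≤ B a b) : 0 ≤ mip A B := by
  rw [mip_eq_sum]
  exact Finset.sum_nonneg fun _ _ => Finset.sum_nonneg fun _ _ => mul_nonneg (hA _ _) (hB _ _)

lemma mul_entry_nonneg {K : ℕ} {A B : Matrix (Fin K) (Fin K) ℝ} (hA : ∀ a b, 0 ≤ A a b)
    (hB : ∀ a b, 0 ≤ B a b) : ∀ a b, 0 ≤ (A * B) a b := by
  intro a b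
  rw [Matrix.mul_apply]
  exact Finset.sum_nonneg fun _ _ => mul_nonneg (hA _ _) (hB _ _)

lemma diag_entry_nonneg {K : ℕ} {v : Fin K → ℝ} (hv : ∀ a, 0 ≤ v a) :
    ∀ a b, 0 ≤ (diagonal v) a b := by
  intro a b
  rw [Matrix.diagonal_apply]
  split_ifs
  · exact hv a
  · exact le_rfl

/-- The linear operator `X ↦ ΞΛXΞCΞ`. -/
def opM {K : ℕ} (e ϱ : Fin K → ℝ) (C : Matrix (Fin K) (Fin K) ℝ) :
    Matrix (Fin K) (Fin K) ℝ →ₗ[ℝ] Matrix (Fin K) (Fin K) ℝ where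
  toFun X := diagonal e * diagonal ϱ * X * diagonal e * C * diagonal e
  map_add' X Y := by simp only [Matrix.mul_add, Matrix.add_mul]
  map_smul' c X := by simp only [Matrix.mul_smul, Matrix.smul_mul, RingHom.id_apply]

lemma opM_apply {K : ℕ} (e ϱ : Fin K → ℝ) (C X : Matrix (Fin K) (Fin K) ℝ) :
    opM e ϱ C X = diagonal e * diagonal ϱ * X * diagonal e * C * diagonal e := rfl

lemma diag_comm {K : ℕ} (e ϱ : Fin K → ℝ) :
    (diagonal ϱ * diagonal e : Matrix (Fin K) (Fin K) ℝ) = diagonal e * diagonal ϱ := by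
  simp only [Matrix.diagonal_mul_diagonal, mul_comm]

lemma opM_symm {K : ℕ} (e ϱ : Fin K → ℝ) (C : Matrix (Fin K) (Fin K) ℝ) (hC : Cᵀ = C)
    (X Y : Matrix (Fin K) (Fin K) ℝ) : mip X (opM e ϱ C Y) = mip Y (opM e ϱ C X) := by
  simp only [mip, opM_apply]
  rw [← Matrix.trace_transpose]
  simp only [Matrix.transpose_mul, Matrix.diagonal_transpose, Matrix.transpose_transpose, hC]
  rw [show diagonal e * (C * (diagonal e * (Yᵀ * (diagonal ϱ * diagonal e)))) * X =
    (diagonal e * C * diagonal e) * (Yᵀ * (diagonal ϱ * diagonal e) * X) by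
      simp only [Matrix.mul_assoc], Matrix.trace_mul_comm, diag_comm]
  simp only [Matrix.mul_assoc]

def bL {K : ℕ} (e ϱ : Fin K → ℝ) (C : Matrix (Fin K) (Fin K) ℝ) (β : ℝ) :
    Matrix (Fin K) (Fin K) ℝ →ₗ[ℝ] Matrix (Fin K) (Fin K) ℝ →ₗ[ℝ] ℝ :=
  (mipL K).compl₂ (opM e ϱ C) + β • mipL K

lemma bL_apply {K : ℕ} (e ϱ : Fin K → ℝ) (C : Matrix (Fin K) (Fin K) ℝ) (β : ℝ)
    (X Y : Matrix (Fin K) (Fin K) ℝ) :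
    bL e ϱ C β X Y = mip X (opM e ϱ C Y) + β * mip X Y := rfl

/-- Direction space of the face of `S` on which the entries in `I` vanish. -/
def faceV {K : ℕ} (e ϱ : Fin K → ℝ) (I : Set (Fin K × Fin K)) :
    Submodule ℝ (Matrix (Fin K) (Fin K) ℝ) where
  carrier := {D | D.mulVec e = 0 ∧ Dᵀ.mulVec (fun j => e j * ϱ j) = 0 ∧ D.trace = 0 ∧
    ∀ p ∈ I, D p.1 p.2 = 0}
  add_mem' := by
    rintro A B ⟨h1, h2, h3, h4⟩ ⟨g1, g2, g3, g4⟩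
    refine ⟨?_, ?_, ?_, ?_⟩
    · rw [Matrix.add_mulVec, h1, g1, add_zero]
    · rw [Matrix.transpose_add, Matrix.add_mulVec, h2, g2, add_zero]
    · rw [Matrix.trace_add, h3, g3, add_zero]
    · intro p hp; rw [Matrix.add_apply, h4 p hp, g4 p hp, add_zero]
  zero_mem' := by
    refine ⟨?_, ?_, ?_, ?_⟩ <;> simp
  smul_mem' := by
    rintro c A ⟨h1, h2, h3, h4⟩
    refine ⟨?_, ?_, ?_, ?_⟩
    · rw [Matrix.smul_mulVec, h1, smul_zero]
    · rw [Matrix.transpose_smul, Matrix.smul_mulVec, h2, smul_zero]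
    · rw [Matrix.trace_smul, h3, smul_zero]
    · intro p hp; rw [Matrix.smul_apply, h4 p hp, smul_zero]

lemma Sset_convex {K : ℕ} (e ϱ : Fin K → ℝ) : Convex ℝ (Sset e ϱ) := by
  rintro A ⟨h1, h2, h3, h4⟩ B ⟨g1, g2, g3, g4⟩ s t hs ht hst
  refine ⟨?_, ?_, ?_, ?_⟩
  · rw [Matrix.add_mulVec, Matrix.smul_mulVec, Matrix.smul_mulVec, h1, g1, ← add_smul, hst,
      one_smul]
  · rw [Matrix.transpose_add, Matrix.transpose_smul, Matrix.transpose_smul, Matrix.add_mulVec,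
      Matrix.smul_mulVec, Matrix.smul_mulVec, h2, g2, ← add_smul, hst, one_smul]
  · rw [Matrix.trace_add, Matrix.trace_smul, Matrix.trace_smul, h3, g3]; simp
  · intro a b
    simp only [Matrix.add_apply, Matrix.smul_apply, smul_eq_mul]
    exact add_nonneg (mul_nonneg hs (h4 a b)) (mul_nonneg ht (g4 a b))

lemma Sset_closed {K : ℕ} (e ϱ : Fin K → ℝ) : IsClosed (Sset e ϱ) := by
  have : Sset e ϱ = {W | W.mulVec e = (fun _ => 1)} ∩ ({W | Wᵀ.mulVec (fun j => e j * ϱ j) = ϱ} ∩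
    ({W | W.trace = 0} ∩ {W | ∀ a b, 0 ≤ W a b})) := rfl
  rw [this]
  refine IsClosed.inter ?_ (IsClosed.inter ?_ (IsClosed.inter ?_ ?_))
  · exact isClosed_eq (by fun_prop) (by fun_prop)
  · exact isClosed_eq (by fun_prop) (by fun_prop)
  · exact isClosed_eq (by fun_prop) (by fun_prop)
  · simp only [Set.setOf_forall]
    exact isClosed_iInter fun a => isClosed_iInter fun b => isClosed_le (by fun_prop) (by fun_prop)

lemma Sset_face {K : ℕ} (e ϱ : Fin K → ℝ) (x : Matrix (Fin K) (Fin K) ℝ) (hx : x ∈ Sset e ϱ)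
    (d : Matrix (Fin K) (Fin K) ℝ) (hd : d ∈ faceV e ϱ {p | x p.1 p.2 = 0}) :
    ∀ᶠ t : ℝ in 𝓝[>] 0, x + t • d ∈ Sset e ϱ := by
  obtain ⟨h1, h2, h3, h4⟩ := hx
  obtain ⟨g1, g2, g3, g4⟩ := hd
  have hent : ∀ᶠ t : ℝ in 𝓝[>] 0, ∀ a b, 0 ≤ x a b + t * d a b := by
    refine eventually_all.2 fun a => eventually_all.2 fun b => ?_
    rcases (h4 a b).eq_or_lt with h | h
    · have : d a b = 0 := g4 (a, b) h.symm
      exact Eventually.of_forall fun t => by rw [this, ← h]; simp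
    · have hc : Continuous fun t : ℝ => x a b + t * d a b := by fun_prop
      have ht := hc.tendsto 0
      simp only [zero_mul, add_zero] at ht
      exact ((ht.mono_left nhdsWithin_le_nhds).eventually (lt_mem_nhds h)).mono fun t ht => le_of_lt ht
  filter_upwards [hent] with t ht
  refine ⟨?_, ?_, ?_, ?_⟩
  · rw [Matrix.add_mulVec, Matrix.smul_mulVec, h1, g1, smul_zero, add_zero]
  · rw [Matrix.transpose_add, Matrix.transpose_smul, Matrix.add_mulVec,
      Matrix.smul_mulVec, h2, g2, smul_zero, add_zero]
  · rw [Matrix.trace_add, Matrix.trace_smul, h3, g3]; simp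
  · intro a b
    simpa only [Matrix.add_apply, Matrix.smul_apply, smul_eq_mul] using ht a b

lemma Sset_diff {K : ℕ} (e ϱ : Fin K → ℝ) (x : Matrix (Fin K) (Fin K) ℝ) (hx : x ∈ Sset e ϱ)
    (y : Matrix (Fin K) (Fin K) ℝ) (hy : y ∈ Sset e ϱ)
    (hxy : ({p | x p.1 p.2 = 0} : Set (Fin K × Fin K)) = {p | y p.1 p.2 = 0}) :
    y - x ∈ faceV e ϱ {p | x p.1 p.2 = 0} := by
  obtain ⟨h1, h2, h3, h4⟩ := hx
  obtain ⟨g1, g2, g3, g4⟩ := hy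
  refine ⟨?_, ?_, ?_, ?_⟩
  · rw [Matrix.sub_mulVec, h1, g1, sub_self]
  · rw [Matrix.transpose_sub, Matrix.sub_mulVec, h2, g2, sub_self]
  · rw [Matrix.trace_sub, h3, g3, sub_self]
  · intro p hp
    have hp' : p ∈ ({p | y p.1 p.2 = 0} : Set (Fin K × Fin K)) := hxy ▸ hp
    rw [Matrix.sub_apply, show y p.1 p.2 = 0 from hp', show x p.1 p.2 = 0 from hp, sub_self]

lemma fB_eq {K m : ℕ} (e ϱ : Fin K → ℝ) (C : Matrix (Fin K) (Fin K) ℝ) (β : ℝ)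
    (Z : Fin m → Matrix (Fin K) (Fin K) ℝ) :
    fB e ϱ C β Z = ∑ i, mipL K (diagonal ϱ * diagonal e * C * diagonal e) (Z i) +
      ∑ i, ∑ j ∈ Finset.Ioi i, bL e ϱ C β (Z i) (Z j) := by
  simp only [fB, fE, bL_apply, mipL_apply, opM_apply, Finset.sum_add_distrib, ← Finset.mul_sum]
  rw [Finset.sum_congr rfl fun i _ => mip_symm (Z i) _, add_assoc]

lemma grad_eq {K m : ℕ} (e ϱ : Fin K → ℝ) (C : Matrix (Fin K) (Fin K) ℝ) (hC : Cᵀ = C) (β : ℝ)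
    (Z : Fin m → Matrix (Fin K) (Fin K) ℝ) (i : Fin m) (D : Matrix (Fin K) (Fin K) ℝ) :
    mip (gradB e ϱ C β Z i) D = mipL K (diagonal ϱ * diagonal e * C * diagonal e) D +
      ∑ j ∈ Finset.univ.erase i, bL e ϱ C β (Z j) D := by
  have h : gradB e ϱ C β Z i = diagonal ϱ * diagonal e * C * diagonal e +
      ∑ j ∈ Finset.univ.erase i, opM e ϱ C (Z j) + β • ∑ j ∈ Finset.univ.erase i, Z j := by
    rw [gradB, aux_sum_erase i (fun j => opM e ϱ C (Z j)), diag_comm]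
    simp only [opM_apply, add_assoc]
  rw [h, ← mipL_apply]
  simp only [map_add, map_sum, map_smul, LinearMap.add_apply, LinearMap.sum_apply,
    LinearMap.smul_apply, smul_eq_mul, bL_apply, Finset.sum_add_distrib, mipL_apply,
    ← Finset.mul_sum, add_assoc]
  congr 2
  refine Finset.sum_congr rfl fun j _ => ?_
  rw [mip_symm, opM_symm e ϱ C hC]

lemma pbcd_main {K m : ℕ}
    (e ϱ : Fin K → ℝ) (he : ∀ a, 0 < e a) (hϱ : ∀ a, 0 ≤ ϱ a)
    (C : Matrix (Fin K) (Fin K) ℝ) (hCsym : Cᵀ = C)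
    (hC0 : ∀ a b, 0 ≤ C a b)
    (β σ : ℝ) (hβ : 0 < β) (hσ : 0 < σ)
    (Zseq : ℕ → Fin m → Matrix (Fin K) (Fin K) ℝ)
    (hZ0 : ∀ i, Zseq 0 i ∈ Sset e ϱ)
    (hPBCD : IsPBCD e ϱ C β σ Zseq) :
    ∃ Zstar : Fin m → Matrix (Fin K) (Fin K) ℝ,
      IsKKT e ϱ C β Zstar ∧ Tendsto Zseq atTop (nhds Zstar) := by
  have he' := diag_entry_nonneg fun a => (he a).le
  have hϱ' := diag_entry_nonneg hϱ
  have hF0 : ∀ Z : Fin m → Matrix (Fin K) (Fin K) ℝ, (∀ i, Z i ∈ Sset e ϱ) →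
      0 ≤ fB e ϱ C β Z := by
    intro Z hZ
    have hZ' : ∀ i a b, 0 ≤ Z i a b := fun i => (hZ i).2.2.2
    unfold fB fE
    refine add_nonneg (add_nonneg ?_ ?_) (mul_nonneg hβ.le ?_)
    · refine Finset.sum_nonneg fun i _ => mip_nonneg _ _ (hZ' i) ?_
      exact mul_entry_nonneg (mul_entry_nonneg (mul_entry_nonneg hϱ' he') hC0) he'
    · refine Finset.sum_nonneg fun i _ => Finset.sum_nonneg fun j _ => mip_nonneg _ _ (hZ' i) ?_
      exact mul_entry_nonneg (mul_entry_nonneg (mul_entry_nonneg (mul_entry_nonneg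
        (mul_entry_nonneg he' hϱ') (hZ' j)) he') hC0) he'
    · exact Finset.sum_nonneg fun i _ => Finset.sum_nonneg fun j _ =>
        mip_nonneg _ _ (hZ' i) (hZ' j)
  obtain ⟨Zs, hZs, hvi, hlim⟩ := aux_block
    (mipL K (diagonal ϱ * diagonal e * C * diagonal e)) (bL e ϱ C β) (mipL K)
    (fun X Y => by rw [bL_apply, bL_apply, opM_symm e ϱ C hCsym, mip_symm X Y])
    mip_symm mip_norm (Sset e ϱ) (Sset_convex e ϱ) (Sset_closed e ϱ)
    (fun x => ({p | x p.1 p.2 = 0} : Set (Fin K × Fin K))) (faceV e ϱ)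
    (Sset_face e ϱ) (Sset_diff e ϱ) (fB e ϱ C β) (fB_eq e ϱ C β) hF0 σ hσ Zseq hZ0 hPBCD
  refine ⟨Zs, ⟨hZs, fun i X hX => ?_⟩, hlim⟩
  rw [grad_eq e ϱ C hCsym]
  exact hvi i X hX

end PBCDConcrete

/-- Theorem 3.1, part 1.
For `σ > 0`, the exact PBCD sequence started in `S^{N−1}` converges (as a whole sequence) to
a KKT point of the penalized problem `(P_β)`. -/
theorem pbcd_exact_global_convergence_to_KKT
    (K N : ℕ) (hK : 1 ≤ K) (hN : 3 ≤ N)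
    (e ϱ : Fin K → ℝ) (he : ∀ a, 0 < e a) (hϱ : ∀ a, 0 ≤ ϱ a)
    (C : Matrix (Fin K) (Fin K) ℝ) (hCsym : Cᵀ = C)
    (hC0 : ∀ a b, 0 ≤ C a b) (hCd : ∀ a, C a a = 0)
    (hS : (Sset e ϱ).Nonempty)
    (β σ : ℝ) (hβ : 0 < β) (hσ : 0 < σ)
    (Zseq : ℕ → Fin (N - 1) → Matrix (Fin K) (Fin K) ℝ)
    (hZ0 : ∀ i, Zseq 0 i ∈ Sset e ϱ)
    (hPBCD : IsPBCD e ϱ C β σ Zseq) :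
    ∃ Zstar : Fin (N - 1) → Matrix (Fin K) (Fin K) ℝ,
      IsKKT e ϱ C β Zstar ∧ Tendsto Zseq atTop (nhds Zstar) := by
  exact pbcd_main e ϱ he hϱ C hCsym hC0 β σ hβ hσ Zseq hZ0 hPBCD
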